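/- arXiv:2311.09789 — 5 statements merged into one kernel-verified Lean document; each statement's English description precedes it below -/
import Mathlib

section
/- The set Rec = {e : e indexes some computable subset of ℕ} of Gödel codes of characteristic functions of computable sets is not recursively enumerable. -/
/-- A weak order: asymmetric and negatively transitive. -/
def IsWeakPref {X : Type*} (P : X → X → Prop) : Prop :=
  (∀ x y : X, P x y → ¬ P y x) ∧ ∀ x y z : X, ¬ P x y → ¬ P y z → ¬ P x z

/-- A profile assigns a weak order on the alternatives to each voter in `ℕ`. -/
def IsProf {X : Type*} (f : ℕ → X → X → Prop) : Prop := ∀ v : ℕ, IsWeakPref (f v)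

/-- A set of naturals is computable if its membership predicate is computable. -/
def ComputableSet (A : Set ℕ) : Prop := ComputablePred (· ∈ A)

/-- A profile is REC-measurable if each of its preference coalitions is computable. -/
def RECMeasurable {X : Type*} (f : ℕ → X → X → Prop) : Prop :=
  ∀ a b : X, ComputableSet {v : ℕ | f v a b}

/-- The Gödel numbering of partial recursive functions via `Nat.Partrec.Code`. -/
def phi (e : ℕ) : ℕ →. ℕ := (Denumerable.ofNat Nat.Partrec.Code e).eval

/-- `e` indexes `A` if `φ_e` is the characteristic function of `A`. -/
def Indexes (e : ℕ) (A : Set ℕ) : Prop :=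
  ∀ n : ℕ, (n ∈ A → phi e n = Part.some 1) ∧ (n ∉ A → phi e n = Part.some 0)

/-- The set of Gödel codes of characteristic functions of computable sets. -/
def RecSet : Set ℕ := {e : ℕ | ∃ A : Set ℕ, ComputableSet A ∧ Indexes e A}

/-- A set of naturals is r.e. if it is the domain of a partial recursive function. -/
def REset (A : Set ℕ) : Prop :=
  ∃ g : ℕ →. ℕ, Partrec g ∧ ∀ n : ℕ, n ∈ A ↔ (g n).Dom

/-- the set of Gödel codes of characteristic functions of computable
sets is not recursively enumerable. -/
theorem recSet_not_re : ¬ REset RecSet := by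
  rintro ⟨g, hg, hdom⟩
  obtain ⟨cg, rfl⟩ := Nat.Partrec.Code.exists_code.1 (Partrec.nat_iff.1 hg)
  have hf : Partrec₂ (fun (c : Nat.Partrec.Code) (n : ℕ) =>
      ((bif (Nat.Partrec.Code.evaln n cg (Encodable.encode c)).isSome then none else some 0 :
        Option ℕ) : Part ℕ)) := by
    have h1 : Computable (fun p : Nat.Partrec.Code × ℕ =>
        Nat.Partrec.Code.evaln p.2 cg (Encodable.encode p.1)) :=
      Nat.Partrec.Code.primrec_evaln.to_comp.comp
        ((Computable.snd.pair (Computable.const cg)).pair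
          (Computable.encode.comp Computable.fst))
    exact Computable.ofOption (Computable.cond (Primrec.option_isSome.to_comp.comp h1)
      (Computable.const none) (Computable.const (some 0)))
  obtain ⟨c, hc⟩ := Nat.Partrec.Code.fixed_point₂ hf
  have hphi : phi (Encodable.encode c) = c.eval := by simp [phi]
  by_cases h : Encodable.encode c ∈ RecSet
  · have hd := (hdom _).1 h
    obtain ⟨k, hk⟩ := Nat.Partrec.Code.evaln_complete.1 (Part.get_mem hd)
    obtain ⟨A, -, hA⟩ := h
    have h0 : phi (Encodable.encode c) k = Part.none := by
      rw [hphi, hc]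
      simp [Option.mem_def.1 hk]
    by_cases hkA : k ∈ A
    · have := (hA k).1 hkA
      rw [h0] at this
      exact Part.some_ne_none _ this.symm
    · have := (hA k).2 hkA
      rw [h0] at this
      exact Part.some_ne_none _ this.symm
  · apply h
    refine ⟨∅, ?_, fun n => ⟨fun hn => hn.elim, fun _ => ?_⟩⟩
    · exact ComputablePred.computable_iff.2 ⟨fun _ => false, Computable.const _, by ext; simp⟩
    · have hn : Nat.Partrec.Code.evaln n cg (Encodable.encode c) = none := by
        rw [Option.eq_none_iff_forall_not_mem]
        intro x hx
        exact h ((hdom _).2 (Part.dom_iff_mem.2 ⟨x, Nat.Partrec.Code.evaln_sound hx⟩))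
      rw [hphi, hc]
      simp [hn]
end

section
/- Fix distinct alternatives x, y ∈ X (with X having at least 3 elements). The set Rec = {e : e indexes some computable subset of ℕ} is many-one reducible to S_{x,y}: there is a total computable function g : ℕ → ℕ such that for every e, e ∈ Rec if and only if g(e) ∈ S_{x,y}, where S_{x,y} = {⟨e1,e2,e3⟩ : there exists a REC-measurable profile f such that e1 indexes {v : x f(v) y}, e2 indexes {v : y f(v) x}, and e3 indexes {v : neither x f(v) y nor y f(v) x}}. -/
/-- The set of codes of REC-measurable profiles restricted to `{x, y}`. -/
def SCodes {X : Type*} (x y : X) : Set ℕ :=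
  {n : ℕ | ∃ (e1 e2 e3 : ℕ) (f : ℕ → X → X → Prop),
    n = Nat.pair e1 (Nat.pair e2 e3) ∧ IsProf f ∧ RECMeasurable f ∧
    Indexes e1 {v : ℕ | f v x y} ∧ Indexes e2 {v : ℕ | f v y x} ∧
    Indexes e3 {v : ℕ | ¬ f v x y ∧ ¬ f v y x}}

theorem exists_negCode : ∃ N : Nat.Partrec.Code, ∀ n : ℕ, N.eval n = Part.some (1 - n) := by
  have h : Computable (fun n : ℕ => 1 - n) :=
    (Primrec.nat_sub.comp (Primrec.const 1) Primrec.id).to_comp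
  obtain ⟨c, hc⟩ := Nat.Partrec.Code.exists_code.1 (Partrec.nat_iff.1 h.partrec)
  exact ⟨c, fun n => by rw [hc]; rfl⟩

/-- `Rec` is many-one reducible to `S_{x,y}`. -/
theorem recSet_manyone_reducible_sCodes {X : Type*}
    (hX : ∃ a b c : X, a ≠ b ∧ a ≠ c ∧ b ≠ c) (x y : X) (hxy : x ≠ y) :
    ∃ g : ℕ → ℕ, Computable g ∧ ∀ e : ℕ, e ∈ RecSet ↔ g e ∈ SCodes x y := by
  classical
  obtain ⟨N, hN⟩ := exists_negCode
  let z : ℕ := Encodable.encode (Nat.Partrec.Code.const 0)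
  let ng : ℕ → ℕ := fun e =>
    Encodable.encode (Nat.Partrec.Code.comp N (Denumerable.ofNat Nat.Partrec.Code e))
  have hz : ∀ n, phi z n = Part.some 0 := by
    intro n
    simp [phi, z]
  have hng : ∀ e n k, phi e n = Part.some k → phi (ng e) n = Part.some (1 - k) := by
    intro e n k h
    have h2 : phi (ng e) n = (phi e n).bind (fun m => N.eval m) := by
      simp [phi, ng, Nat.Partrec.Code.eval]
      rfl
    rw [h2, h, Part.bind_some, hN]
  have hngc : Computable ng := by
    refine Primrec.to_comp (Primrec.encode.comp ?_)
    exact Nat.Partrec.Code.primrec₂_comp.comp (Primrec.const N) (Primrec.ofNat _)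
  refine ⟨fun e => Nat.pair e (Nat.pair z (ng e)), ?_, ?_⟩
  · exact Primrec₂.natPair.to_comp.comp Computable.id
      (Primrec₂.natPair.to_comp.comp (Computable.const z) hngc)
  intro e
  constructor
  · rintro ⟨A, hA, hi⟩
    refine ⟨e, z, ng e, fun v a b => v ∈ A ∧ a = x ∧ b ≠ x, rfl, ?_, ?_, ?_, ?_, ?_⟩
    · intro v
      constructor
      · rintro a b ⟨_, h1, h2⟩ ⟨_, h3, h4⟩
        exact h2 h3
      · rintro a b c h1 h2 ⟨hv, h3, h4⟩
        by_cases hb : b = x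
        · exact h2 ⟨hv, hb, h4⟩
        · exact h1 ⟨hv, h3, hb⟩
    · intro a b
      by_cases h : a = x ∧ b ≠ x
      · have : {v : ℕ | v ∈ A ∧ a = x ∧ b ≠ x} = A := by
          ext v; simp [h.1, h.2]
        rw [this]; exact hA
      · have : {v : ℕ | v ∈ A ∧ a = x ∧ b ≠ x} = (∅ : Set ℕ) := by
          ext v
          simp only [Set.mem_ofPred_eq, Set.mem_empty_iff_false, iff_false]
          exact fun hh => h hh.2
        rw [this]
        exact ComputablePred.computable_iff.2
          ⟨fun _ => false, Computable.const false, by funext v; simp⟩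
    · intro n
      have := hi n
      simpa [hxy.symm] using this
    · intro n
      simpa [hxy.symm] using hz n
    · intro n
      have h := hi n
      constructor
      · intro hn
        have : n ∉ A := by simpa [hxy.symm] using hn
        exact hng e n 0 (h.2 this)
      · intro hn
        have : n ∈ A := by simpa [hxy.symm] using hn
        exact hng e n 1 (h.1 this)
  · rintro ⟨e1, e2, e3, f, h, _, hm, h1, _, _⟩
    have := (Nat.pair_eq_pair.1 h).1
    subst this
    exact ⟨_, hm x y, h1⟩
end

section
/- Let σ be a REC-social welfare function satisfying unanimity and independence (on REC-measurable profiles), where X has at least 3 elements, and let U be an ultrafilter on the Boolean algebra REC that is decisive for σ. Then σ is dictatorial (on REC-measurable profiles) if and only if σ satisfies DDC with respect to U, i.e. the partial function β_σ has an extension to a partial recursive function. -/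
/-- A REC-measurable profile (its restriction is what a REC-social welfare
function is defined on). -/
def GoodProfile {X : Type*} (f : ℕ → X → X → Prop) : Prop :=
  IsProf f ∧ RECMeasurable f

/-- Unanimity, on REC-measurable profiles. -/
def Unanimity {X : Type*} (σ : (ℕ → X → X → Prop) → X → X → Prop) : Prop :=
  ∀ (x y : X) (f : ℕ → X → X → Prop), GoodProfile f → (∀ v : ℕ, f v x y) → σ f x y

/-- Independence, on REC-measurable profiles. -/
def Independence {X : Type*} (σ : (ℕ → X → X → Prop) → X → X → Prop) : Prop :=
  ∀ (x y : X) (f g : ℕ → X → X → Prop), GoodProfile f → GoodProfile g →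
    (∀ v : ℕ, (f v x y ↔ g v x y) ∧ (f v y x ↔ g v y x)) →
    ((σ f x y ↔ σ g x y) ∧ (σ f y x ↔ σ g y x))

/-- Dictatorship, on REC-measurable profiles. -/
def Dictatorial {X : Type*} (σ : (ℕ → X → X → Prop) → X → X → Prop) : Prop :=
  ∃ v0 : ℕ, ∀ (x y : X) (f : ℕ → X → X → Prop), GoodProfile f → f v0 x y → σ f x y

/-- An ultrafilter on the Boolean algebra REC of computable subsets of `ℕ`. -/
def RECUltrafilter (𝒰 : Set (Set ℕ)) : Prop :=
  (∀ A ∈ 𝒰, ComputableSet A) ∧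
  (∀ A B : Set ℕ, A ∈ 𝒰 → ComputableSet B → A ⊆ B → B ∈ 𝒰) ∧
  (∀ A B : Set ℕ, A ∈ 𝒰 → B ∈ 𝒰 → A ∩ B ∈ 𝒰) ∧
  (∅ : Set ℕ) ∉ 𝒰 ∧
  ∀ A : Set ℕ, ComputableSet A → Xor' (A ∈ 𝒰) (Aᶜ ∈ 𝒰)

/-- `𝒰` is decisive for `σ`: coalitions in `𝒰` decide the verdict. -/
def Decisive {X : Type*} (σ : (ℕ → X → X → Prop) → X → X → Prop)
    (𝒰 : Set (Set ℕ)) : Prop :=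
  ∀ U ∈ 𝒰, ∀ (x y : X) (f : ℕ → X → X → Prop), GoodProfile f →
    (∀ v ∈ U, f v x y) → σ f x y

/-- Pairwise computability: for each ordered pair of distinct alternatives there
is a partial recursive function deciding the verdict from any code of the
restricted profile. -/
def PairwiseComputable {X : Type*}
    (σ : (ℕ → X → X → Prop) → X → X → Prop) : Prop :=
  ∀ x y : X, x ≠ y → ∃ γ : ℕ →. ℕ, Partrec γ ∧
    ∀ f : ℕ → X → X → Prop, GoodProfile f → ∀ e1 e2 e3 : ℕ,
      Indexes e1 {v : ℕ | f v x y} → Indexes e2 {v : ℕ | f v y x} →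
      Indexes e3 {v : ℕ | ¬ f v x y ∧ ¬ f v y x} →
      (σ f x y → γ (Nat.pair e1 (Nat.pair e2 e3)) = Part.some 1) ∧
      (¬ σ f x y → γ (Nat.pair e1 (Nat.pair e2 e3)) = Part.some 0)

/-- Decidability of Decisive Coalitions w.r.t. `𝒰`: the partial function `β_σ`
(deciding membership in `𝒰` from indices of computable sets) extends to a
partial recursive function. -/
def DDC (𝒰 : Set (Set ℕ)) : Prop :=
  ∃ g : ℕ →. ℕ, Partrec g ∧ ∀ (e : ℕ) (A : Set ℕ), ComputableSet A → Indexes e A →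
    (A ∈ 𝒰 → g e = Part.some 1) ∧ (A ∉ 𝒰 → g e = Part.some 0)

theorem aux_compl {A : Set ℕ} (h : ComputableSet A) : ComputableSet Aᶜ := by
  have h2 := ComputablePred.not h
  exact h2

theorem aux_prim {p : ℕ → Prop} [DecidablePred p] (h : PrimrecPred p) :
    ComputableSet {n | p n} := by
  have h2 := h.decide.to_comp
  exact ⟨inferInstanceAs (DecidablePred p), h2⟩

theorem aux_const (p : Prop) : ComputableSet {_n : ℕ | p} := by
  classical
  by_cases h : p
  · exact ⟨fun _ => .isTrue h, by simpa [h] using Computable.const (α := ℕ) true⟩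
  · exact ⟨fun _ => .isFalse h, by simpa [h] using Computable.const (α := ℕ) false⟩

theorem aux_dict {X : Type*}
    (hX : ∃ a b c : X, a ≠ b ∧ a ≠ c ∧ b ≠ c)
    (σ : (ℕ → X → X → Prop) → X → X → Prop)
    (hW : ∀ f : ℕ → X → X → Prop, GoodProfile f → IsWeakPref (σ f))
    (𝒰 : Set (Set ℕ)) (h𝒰 : RECUltrafilter 𝒰) (hD : Decisive σ 𝒰) (v0 : ℕ)
    (hv : ∀ (x y : X) (f : ℕ → X → X → Prop), GoodProfile f → f v0 x y → σ f x y)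
    (A : Set ℕ) (hA : A ∈ 𝒰) : v0 ∈ A := by
  by_contra hn
  obtain ⟨a, b, -, hab, -, -⟩ := hX
  have hc := h𝒰.1 A hA
  let f : ℕ → X → X → Prop := fun v p q =>
    (v ∈ A ∧ p = a ∧ q ≠ a) ∨ (v ∉ A ∧ p ≠ a ∧ q = a)
  have hf : GoodProfile f := by
    refine ⟨fun v => ⟨fun x y => ?_, fun x y z => ?_⟩, fun p q => ?_⟩
    · simp only [f]; tauto
    · simp only [f]; tauto
    · by_cases hp : p = a <;> by_cases hq : q = a
      · simpa [f, hp, hq] using aux_const False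
      · simpa [f, hp, hq] using hc
      · have h2 : ComputableSet {v | v ∉ A} := aux_compl hc
        simpa [f, hp, hq] using h2
      · simpa [f, hp, hq] using aux_const False
  have h1 : σ f a b := hD A hA a b f hf fun v hv => Or.inl ⟨hv, rfl, hab.symm⟩
  have h2 : σ f b a := hv b a f hf (Or.inr ⟨hn, hab.symm, rfl⟩)
  exact (hW f hf).1 _ _ h1 h2

theorem aux_phi : Partrec₂ phi := by
  have := Nat.Partrec.Code.eval_part.comp
    ((Computable.ofNat Nat.Partrec.Code).comp Computable.fst)
    (Computable.snd (α := ℕ) (β := ℕ))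
  exact this

theorem aux_Ici {𝒰 : Set (Set ℕ)} (h𝒰 : RECUltrafilter 𝒰)
    (hs : ∀ v : ℕ, ({v} : Set ℕ) ∉ 𝒰) (k : ℕ) : {n : ℕ | k ≤ n} ∈ 𝒰 := by
  obtain ⟨_, _, h3, h4, h5⟩ := h𝒰
  induction k with
  | zero =>
    have := h5 Set.univ (by simpa using aux_const True)
    rw [Set.compl_univ] at this
    have h0 : {n : ℕ | 0 ≤ n} = Set.univ := by ext; simp
    rw [h0]
    rcases this with h | h
    · exact h.1
    · exact absurd h.1 h4
  | succ k ih =>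
    have hc : ComputableSet ({k} : Set ℕ) := by
      have := aux_prim (p := fun n => n = k) (Primrec.eq.comp Primrec.id (Primrec.const k))
      exact this
    have : ({k} : Set ℕ)ᶜ ∈ 𝒰 := by
      rcases h5 {k} hc with h | h
      · exact absurd h.1 (hs k)
      · exact h.1
    convert h3 _ _ ih this using 1
    ext n
    simp
    omega

open Nat.Partrec in
theorem aux_fix (g : Code) : ∃ c : Code, ∀ n,
    c.eval n = Part.some (if Code.evaln n g (Encodable.encode c) = some 0 then 1 else 0) := by
  have hp : Primrec₂ (fun (c : Code) (n : ℕ) =>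
      (if Code.evaln n g (Encodable.encode c) = some 0 then 1 else 0 : ℕ)) := by
    have h1 : Primrec (fun p : Code × ℕ => Code.evaln p.2 g (Encodable.encode p.1)) :=
      Code.primrec_evaln.comp (Primrec.pair (Primrec.pair Primrec.snd (Primrec.const g))
        (Primrec.encode.comp Primrec.fst))
    exact Primrec.ite (Primrec.eq.comp h1 (Primrec.const (some 0)))
      (Primrec.const 1) (Primrec.const 0)
  obtain ⟨c, hc⟩ := Code.fixed_point₂ (f := fun c n =>
    Part.some (if Code.evaln n g (Encodable.encode c) = some 0 then 1 else 0 : ℕ))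
    hp.to_comp.partrec₂
  exact ⟨c, fun n => by rw [hc]⟩

open Nat.Partrec in
theorem aux_principal {𝒰 : Set (Set ℕ)} (h𝒰 : RECUltrafilter 𝒰) (hd : DDC 𝒰) :
    ∃ v : ℕ, ({v} : Set ℕ) ∈ 𝒰 := by
  by_contra hs
  push Not at hs
  obtain ⟨g, hg, H⟩ := hd
  obtain ⟨cg, rfl⟩ := Code.exists_code.1 (Partrec.nat_iff.1 hg)
  obtain ⟨c, hc⟩ := aux_fix cg
  set e := Encodable.encode c with he
  let A : Set ℕ := {n | Code.evaln n cg e = some 0}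
  have hA : ComputableSet A := by
    refine aux_prim (p := fun n => Code.evaln n cg e = some 0) ?_
    exact Primrec.eq.comp (Code.primrec_evaln.comp
      (Primrec.pair (Primrec.pair Primrec.id (Primrec.const cg)) (Primrec.const e)))
      (Primrec.const (some 0))
  have hi : Indexes e A := by
    intro n
    have : phi e n = c.eval n := by simp [phi, he]
    rw [this, hc n]
    constructor
    · intro h
      rw [if_pos (show Code.evaln n cg e = some 0 from h)]
    · intro h
      rw [if_neg (show ¬ Code.evaln n cg e = some 0 from h)]
  obtain ⟨H1, H0⟩ := H e A hA hi
  by_cases hm : A ∈ 𝒰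
  · have h1 := H1 hm
    have : A = ∅ := by
      ext n
      simp only [A, Set.mem_setOf_eq, Set.mem_empty_iff_false, iff_false]
      intro h
      have := Code.evaln_sound (c := cg) (k := n) (n := e) (x := 0) h
      rw [h1] at this
      simp at this
    exact h𝒰.2.2.2.1 (this ▸ hm)
  · have h0 := H0 hm
    have : 0 ∈ cg.eval e := by rw [h0]; simp
    obtain ⟨k, hk⟩ := Code.evaln_complete.1 this
    exact hm (h𝒰.2.1 _ _ (aux_Ici h𝒰 hs k) hA fun n hn => Code.evaln_mono hn hk)

/-- a REC-social welfare function with decisive REC-ultrafilter `𝒰`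
is dictatorial iff it satisfies DDC w.r.t. `𝒰`. -/
theorem dictatorial_iff_ddc {X : Type*}
    (hX : ∃ a b c : X, a ≠ b ∧ a ≠ c ∧ b ≠ c)
    (σ : (ℕ → X → X → Prop) → X → X → Prop)
    (hW : ∀ f : ℕ → X → X → Prop, GoodProfile f → IsWeakPref (σ f))
    (hU : Unanimity σ) (hI : Independence σ)
    (𝒰 : Set (Set ℕ)) (h𝒰 : RECUltrafilter 𝒰) (hD : Decisive σ 𝒰) :
    Dictatorial σ ↔ DDC 𝒰 := by
  constructor
  · rintro ⟨v0, hv⟩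
    have key := aux_dict hX σ hW 𝒰 h𝒰 hD v0 hv
    refine ⟨fun e => phi e v0, aux_phi.comp Computable.id (Computable.const v0), ?_⟩
    intro e A hA hi
    refine ⟨fun h => (hi v0).1 (key A h), fun h => (hi v0).2 fun hm => ?_⟩
    rcases h𝒰.2.2.2.2 A hA with h1 | h1
    · exact h h1.1
    · exact key _ h1.1 hm
  · intro hd
    obtain ⟨v, hv⟩ := aux_principal h𝒰 hd
    exact ⟨v, fun x y f hf h => hD {v} hv x y f hf (by rintro w rfl; exact h)⟩
end

section
/- (Mihara's Theorem) Let σ be a REC-social welfare function (with voter set ℕ and set X of alternatives having at least 3 elements) satisfying unanimity and independence on REC-measurable profiles. If σ is pairwise computable, then σ is dictatorial: there exists a voter v0 ∈ ℕ such that for all x, y ∈ X and every REC-measurable profile f, x f(v0) y implies x σ(f) y. -/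
namespace Mihara
open Nat.Partrec (Code)
open Classical in
/-- conditional computable functions -/
theorem comp_ite {p q : ℕ → ℕ} {A : Set ℕ} (hA : ComputableSet A) (hp : Computable p)
    (hq : Computable q) : Computable (fun v => if v ∈ A then p v else q v) := by
  obtain ⟨hd, h⟩ := hA
  refine (Computable.cond h hp hq).of_eq fun n => ?_
  by_cases hn : n ∈ A <;> simp [hn]

theorem comp_const (k : ℕ) : Computable (fun _ : ℕ => k) := Computable.const k

theorem compSet_lt {p q : ℕ → ℕ} (hp : Computable p) (hq : Computable q) :
    ComputableSet {v | p v < q v} := by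
  have h : Computable₂ (fun a b : ℕ => decide (a < b)) :=
    (Primrec.nat_lt.decide).to_comp
  refine ⟨fun v => inferInstanceAs (Decidable (p v < q v)), ?_⟩
  exact (h.comp hp hq).of_eq fun n => rfl

theorem compSet_compl {A : Set ℕ} (hA : ComputableSet A) : ComputableSet Aᶜ :=
  ComputablePred.not hA

open Classical in
theorem compSet_inter {A B : Set ℕ} (hA : ComputableSet A) (hB : ComputableSet B) :
    ComputableSet (A ∩ B) := by
  have := compSet_lt (comp_const 0) (comp_ite hA (comp_ite hB (comp_const 1) (comp_const 0)) (comp_const 0))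
  convert this using 1
  ext v
  by_cases h1 : v ∈ A <;> by_cases h2 : v ∈ B <;> simp [h1, h2]

open Classical in
/-- three-alternative profile from utilities -/
noncomputable def util {X : Type*} (a b c : X) (p q r : ℕ → ℕ) (v : ℕ) (z : X) : ℕ :=
  if z = a then p v else if z = b then q v else if z = c then r v else 0

/-- three-alternative profile from utilities -/
def prof {X : Type*} (a b c : X) (p q r : ℕ → ℕ) (v : ℕ) (x y : X) : Prop :=
  util a b c p q r v x < util a b c p q r v y

theorem prof_good {X : Type*} (a b c : X) {p q r : ℕ → ℕ} (hp : Computable p)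
    (hq : Computable q) (hr : Computable r) : GoodProfile (prof a b c p q r) := by
  have hu : ∀ z, Computable (fun v => util a b c p q r v z) := by
    intro z
    unfold util
    split_ifs
    exacts [hp, hq, hr, comp_const 0]
  refine ⟨fun v => ⟨fun x y h => ?_, fun x y z h1 h2 => ?_⟩, fun x y => compSet_lt (hu x) (hu y)⟩
  · unfold prof at *; omega
  · unfold prof at *; omega

theorem util_a {X : Type*} (a b c : X) (p q r : ℕ → ℕ) (v : ℕ) : util a b c p q r v a = p v := by
  simp [util]
theorem util_b {X : Type*} {a b c : X} (h : a ≠ b) (p q r : ℕ → ℕ) (v : ℕ) :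
    util a b c p q r v b = q v := by
  simp [util, h.symm]
theorem util_c {X : Type*} {a b c : X} (h : a ≠ c) (h' : b ≠ c) (p q r : ℕ → ℕ) (v : ℕ) :
    util a b c p q r v c = r v := by
  simp [util, h.symm, h'.symm]

theorem wp_trans {X : Type*} {P : X → X → Prop} (h : IsWeakPref P) {x y z : X}
    (h1 : P x y) (h2 : P y z) : P x z := by
  by_contra h3
  exact h.2 x z y h3 (h.1 _ _ h2) h1

/-- strongly decisive on a pair -/
def Str {X : Type*} (σ : (ℕ → X → X → Prop) → X → X → Prop) (A : Set ℕ) (x y : X) : Prop :=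
  ∀ f : ℕ → X → X → Prop, GoodProfile f → (∀ v ∈ A, f v x y) → σ f x y

/-- weakly decisive on a pair -/
def Weak {X : Type*} (σ : (ℕ → X → X → Prop) → X → X → Prop) (A : Set ℕ) (x y : X) : Prop :=
  ∃ f : ℕ → X → X → Prop, GoodProfile f ∧ (∀ v ∈ A, f v x y) ∧ (∀ v ∉ A, f v y x) ∧ σ f x y

/-- decisive -/
def Dec {X : Type*} (σ : (ℕ → X → X → Prop) → X → X → Prop) (A : Set ℕ) : Prop :=
  ∀ x y : X, x ≠ y → Str σ A x y

section arrow
variable {X : Type*} {σ : (ℕ → X → X → Prop) → X → X → Prop}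

open Classical in
theorem Str.weak {A : Set ℕ} (hA : ComputableSet A) {x y : X} (hxy : x ≠ y)
    (h : Str σ A x y) : Weak σ A x y := by
  have hg := prof_good x y y (comp_ite hA (comp_const 0) (comp_const 1))
    (comp_ite hA (comp_const 1) (comp_const 0)) (comp_const 0)
  have h1 : ∀ v ∈ A, prof x y y (fun v => if v ∈ A then 0 else 1)
    (fun v => if v ∈ A then 1 else 0) (fun _ => 0) v x y := by
    intro v hv
    simp [prof, util_a, util_b hxy, hv]
  refine ⟨_, hg, h1, ?_, h _ hg h1⟩
  intro v hv
  simp [prof, util_a, util_b hxy, hv]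

theorem Weak.apply (hW : ∀ f : ℕ → X → X → Prop, GoodProfile f → IsWeakPref (σ f))
    (hI : Independence σ) {A : Set ℕ} {x y : X} (h : Weak σ A x y)
    {g : ℕ → X → X → Prop} (hg : GoodProfile g) (h1 : ∀ v ∈ A, g v x y)
    (h2 : ∀ v ∉ A, g v y x) : σ g x y := by
  obtain ⟨f, hf, hf1, hf2, hs⟩ := h
  refine ((hI x y f g hf hg ?_).1).1 hs
  intro v
  by_cases hv : v ∈ A
  · have a1 := hf1 v hv
    have a2 := h1 v hv
    have a3 := (hf.1 v).1 _ _ a1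
    have a4 := (hg.1 v).1 _ _ a2
    tauto
  · have a1 := hf2 v hv
    have a2 := h2 v hv
    have a3 := (hf.1 v).1 _ _ a1
    have a4 := (hg.1 v).1 _ _ a2
    tauto

open Classical in
theorem expand_right (hW : ∀ f : ℕ → X → X → Prop, GoodProfile f → IsWeakPref (σ f))
    (hU : Unanimity σ) (hI : Independence σ) {A : Set ℕ} (hA : ComputableSet A) {x y z : X}
    (hxy : x ≠ y) (hxz : x ≠ z) (hyz : y ≠ z) (h : Weak σ A x y) : Str σ A x z := by
  intro g hg hgA
  have hh := prof_good x y z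
    (comp_ite hA (comp_const 0) (comp_ite (hg.2 z x) (comp_const 2) (comp_const 1)))
    (comp_ite hA (comp_const 1) (comp_const 0))
    (comp_ite hA (comp_const 2) (comp_ite (hg.2 x z) (comp_const 2) (comp_const 1)))
  have e1 : σ _ x y := h.apply hW hI hh
    (by intro v hv; simp [prof, util_a, util_b hxy, hv])
    (by intro v hv; simp only [prof, util_a, util_b hxy, hv, if_false]; split_ifs <;> omega)
  have e2 : σ _ y z := hU y z _ hh (by
    intro v; simp only [prof, util_b hxy, util_c hxz hyz]; split_ifs <;> omega)
  refine ((hI x z _ g hh hg ?_).1).1 (wp_trans (hW _ hh) e1 e2)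
  intro v
  have as1 := (hg.1 v).1 x z
  have as2 := hgA v
  simp only [prof, util_a, util_c hxz hyz, Set.mem_setOf_eq]
  split_ifs <;> simp_all

open Classical in
theorem expand_left (hW : ∀ f : ℕ → X → X → Prop, GoodProfile f → IsWeakPref (σ f))
    (hU : Unanimity σ) (hI : Independence σ) {A : Set ℕ} (hA : ComputableSet A) {x y z : X}
    (hxy : x ≠ y) (hxz : x ≠ z) (hyz : y ≠ z) (h : Weak σ A x y) : Str σ A z y := by
  intro g hg hgA
  have hh := prof_good x y z
    (comp_ite hA (comp_const 1) (comp_const 3))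
    (comp_ite hA (comp_const 2) (comp_ite (hg.2 z y) (comp_const 2) (comp_const 1)))
    (comp_ite hA (comp_const 0) (comp_ite (hg.2 y z) (comp_const 2) (comp_const 1)))
  have e1 : σ _ x y := h.apply hW hI hh
    (by intro v hv; simp [prof, util_a, util_b hxy, hv])
    (by intro v hv; simp only [prof, util_a, util_b hxy, hv, if_false]; split_ifs <;> omega)
  have e2 : σ _ z x := hU z x _ hh (by
    intro v; simp only [prof, util_a, util_c hxz hyz]; split_ifs <;> omega)
  refine ((hI z y _ g hh hg ?_).1).1 (wp_trans (hW _ hh) e2 e1)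
  intro v
  have as1 := (hg.1 v).1 z y
  have as2 := hgA v
  simp only [prof, util_b hxy, util_c hxz hyz, Set.mem_setOf_eq]
  split_ifs <;> simp_all

theorem third (hX : ∃ a b c : X, a ≠ b ∧ a ≠ c ∧ b ≠ c) (x y : X) : ∃ z, x ≠ z ∧ y ≠ z := by
  obtain ⟨a, b, c, h1, h2, h3⟩ := hX
  by_contra! h
  by_cases xa : x = a
  · have hb := h b (by rwa [xa])
    have hc := h c (by rwa [xa])
    exact h3 (hb.symm.trans hc)
  · have ha := h a xa
    by_cases xb : x = b
    · have hc := h c (by rwa [xb])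
      exact h2 (ha.symm.trans hc)
    · exact h1 (ha.symm.trans (h b xb))

theorem Weak.dec (hX : ∃ a b c : X, a ≠ b ∧ a ≠ c ∧ b ≠ c)
    (hW : ∀ f : ℕ → X → X → Prop, GoodProfile f → IsWeakPref (σ f))
    (hU : Unanimity σ) (hI : Independence σ) {A : Set ℕ} (hA : ComputableSet A) {x y : X}
    (hxy : x ≠ y) (h : Weak σ A x y) : Dec σ A := by
  have R : ∀ b, x ≠ b → Weak σ A x b := by
    intro b hb
    by_cases hby : y = b
    · subst hby; exact h
    · exact (expand_right hW hU hI hA hxy hb hby h).weak hA hb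
  have R' : ∀ a b, x ≠ b → a ≠ b → Weak σ A a b := by
    intro a b hb hab
    by_cases hxa : x = a
    · subst hxa; exact R b hb
    · exact (expand_left hW hU hI hA hb hxa hab.symm (R b hb)).weak hA hab
  have R2 : ∀ a b, a ≠ b → Weak σ A a b := by
    intro a b hab
    by_cases hb : x = b
    · subst hb
      obtain ⟨z, hz1, hz2⟩ := third hX a x
      exact (expand_right hW hU hI hA hz1 hab hz2.symm (R' a z hz2 hz1)).weak hA hab
    · exact R' a b hb hab
  intro a b hab
  obtain ⟨z, hz1, hz2⟩ := third hX a b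
  exact expand_right hW hU hI hA hz1 hab hz2.symm (R2 a z hz1)

open Classical in
theorem dec_or (hX : ∃ a b c : X, a ≠ b ∧ a ≠ c ∧ b ≠ c)
    (hW : ∀ f : ℕ → X → X → Prop, GoodProfile f → IsWeakPref (σ f))
    (hU : Unanimity σ) (hI : Independence σ) {A : Set ℕ} (hA : ComputableSet A) :
    Dec σ A ∨ Dec σ Aᶜ := by
  obtain ⟨a, b, c, hab, hac, hbc⟩ := id hX
  have hh := prof_good a b c
    (comp_ite hA (comp_const 0) (comp_const 2))
    (comp_ite hA (comp_const 2) (comp_const 1))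
    (comp_ite hA (comp_const 1) (comp_const 0))
  have e := hU c b _ hh (by
    intro v; simp only [prof, util_b hab, util_c hac hbc]; split_ifs <;> omega)
  rcases Classical.em (σ (prof a b c (fun v => if v ∈ A then 0 else 2)
    (fun v => if v ∈ A then 2 else 1) fun v => if v ∈ A then 1 else 0) a b) with hs | hs
  · left
    refine Weak.dec hX hW hU hI hA hab ⟨_, hh, ?_, ?_, hs⟩
    · intro v hv; simp [prof, util_a, util_b hab, hv]
    · intro v hv; simp [prof, util_a, util_b hab, hv]
  · right
    have hs' : σ (prof a b c (fun v => if v ∈ A then 0 else 2)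
        (fun v => if v ∈ A then 2 else 1) fun v => if v ∈ A then 1 else 0) c a := by
      by_contra hn
      exact (hW _ hh).2 _ _ _ hn hs e
    refine Weak.dec hX hW hU hI (compSet_compl hA) hac.symm ⟨_, hh, ?_, ?_, hs'⟩
    · intro v hv
      have hv : v ∉ A := hv
      simp [prof, util_a, util_c hac hbc, hv]
    · intro v hv
      have hv : v ∈ A := by simpa using hv
      simp [prof, util_a, util_c hac hbc, hv]

open Classical in
theorem dec_inter (hX : ∃ a b c : X, a ≠ b ∧ a ≠ c ∧ b ≠ c)
    (hW : ∀ f : ℕ → X → X → Prop, GoodProfile f → IsWeakPref (σ f))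
    (hU : Unanimity σ) (hI : Independence σ) {A B : Set ℕ} (hA : ComputableSet A)
    (hB : ComputableSet B) (dA : Dec σ A) (dB : Dec σ B) : Dec σ (A ∩ B) := by
  obtain ⟨a, b, c, hab, hac, hbc⟩ := id hX
  have hh := prof_good a b c
    (comp_ite hA (comp_ite hB (comp_const 0) (comp_const 1)) (comp_const 2))
    (comp_ite hA (comp_ite hB (comp_const 1) (comp_const 2)) 
      (comp_ite hB (comp_const 0) (comp_const 1)))
    (comp_ite hA (comp_ite hB (comp_const 2) (comp_const 0)) 
      (comp_ite hB (comp_const 1) (comp_const 0)))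
  have e1 := dA a b hab _ hh (by
    intro v hv; simp only [prof, util_a, util_b hab, hv]; split_ifs <;> simp_all)
  have e2 := dB b c hbc _ hh (by
    intro v hv; simp only [prof, util_b hab, util_c hac hbc, hv]; split_ifs <;> simp_all)
  refine Weak.dec hX hW hU hI (compSet_inter hA hB) hac
    ⟨_, hh, ?_, ?_, wp_trans (hW _ hh) e1 e2⟩
  · rintro v ⟨h1, h2⟩
    simp [prof, util_a, util_c hac hbc, h1, h2]
  · intro v hv
    simp only [prof, util_a, util_c hac hbc]
    split_ifs <;> simp_all

theorem dec_univ (hU : Unanimity σ) : Dec σ Set.univ :=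
  fun x y _ f hf h => hU x y f hf fun v => h v trivial

open Classical in
theorem dec_disj (hX : ∃ a b c : X, a ≠ b ∧ a ≠ c ∧ b ≠ c)
    (hW : ∀ f : ℕ → X → X → Prop, GoodProfile f → IsWeakPref (σ f))
    {A : Set ℕ} (hA : ComputableSet A) (d1 : Dec σ A) (d2 : Dec σ Aᶜ) : False := by
  obtain ⟨a, b, c, hab, hac, hbc⟩ := id hX
  obtain ⟨f, hf, h1, h2, h3⟩ := (d1 a b hab).weak hA hab
  exact (hW f hf).1 _ _ h3 (d2 b a hab.symm f hf h2)

theorem Dec.mono {A B : Set ℕ} (h : A ⊆ B) (d : Dec σ A) : Dec σ B :=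
  fun x y hxy f hf hB => d x y hxy f hf fun v hv => hB v (h hv)

theorem dec_tail (hX : ∃ a b c : X, a ≠ b ∧ a ≠ c ∧ b ≠ c)
    (hW : ∀ f : ℕ → X → X → Prop, GoodProfile f → IsWeakPref (σ f))
    (hU : Unanimity σ) (hI : Independence σ) (hn : ∀ n : ℕ, ¬ Dec σ {n}) (m : ℕ) :
    Dec σ {v | m ≤ v} ∧ ComputableSet {v | m ≤ v} := by
  have hc : ∀ m : ℕ, ComputableSet {v | m ≤ v} := by
    intro m
    have := compSet_lt (comp_const m) Computable.succ
    convert this using 1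
    ext v; simp [Nat.lt_succ_iff]
  refine ⟨?_, hc m⟩
  induction m with
  | zero => exact (dec_univ hU).mono (by intro v _; simp)
  | succ k ih =>
    have hs : ComputableSet {k} := by
      convert compSet_inter (hc k) (compSet_compl (hc (k+1))) using 1
      ext v; simp; omega
    have := (dec_or hX hW hU hI hs).resolve_left (hn k)
    refine (dec_inter hX hW hU hI (hc k) (compSet_compl hs) ih this).mono ?_
    rintro v ⟨h1, h2⟩
    simp at *; omega

end arrow

theorem smn {g : Code → ℕ → ℕ} (hg : Computable₂ g) :
    ∃ h : Code → ℕ, Computable h ∧ ∀ c n, phi (h c) n = Part.some (g c n) := by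
  have h1 : Computable (fun m : ℕ => g (Denumerable.ofNat Code m.unpair.1) m.unpair.2) :=
    hg.comp ((Computable.ofNat Code).comp (Computable.fst.comp Computable.unpair))
      (Computable.snd.comp Computable.unpair)
  obtain ⟨k, hk⟩ := Code.exists_code.1 (Partrec.nat_iff.1 h1.partrec)
  refine ⟨fun c => Encodable.encode (k.curry (Encodable.encode c)), ?_, ?_⟩
  · exact Computable.encode.comp
      (Code.primrec₂_curry.to_comp.comp (Computable.const k) Computable.encode)
  · intro c n
    simp [phi, Code.eval_curry, hk]

/-- voters seeing the halting of a code -/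
def HS (c : Code) : Set ℕ := {n | (Code.evaln n c 0).isSome = true}

theorem hs_comp : Computable₂ (fun (c : Code) (n : ℕ) => (Code.evaln n c 0).isSome) :=
  (Primrec.option_isSome.comp (Code.primrec_evaln.comp
    ((Primrec.snd.pair Primrec.fst).pair (Primrec.const 0)))).to_comp

theorem hs_set (c : Code) : ComputableSet (HS c) :=
  ⟨fun n => inferInstanceAs (Decidable ((Code.evaln n c 0).isSome = true)),
    (hs_comp.comp (Computable.const c) Computable.id).of_eq fun n => by
      cases h : (Code.evaln n c 0).isSome <;> simp [HS, h]⟩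

theorem no_sep {γ : ℕ →. ℕ} (hγ : Partrec γ)
    (H : ∀ c e1 e2 e3, Indexes e1 (HS c) → Indexes e2 (HS c)ᶜ → Indexes e3 ∅ →
      ((Code.eval c 0).Dom → γ (Nat.pair e1 (Nat.pair e2 e3)) = Part.some 1) ∧
      (¬ (Code.eval c 0).Dom → γ (Nat.pair e1 (Nat.pair e2 e3)) = Part.some 0)) : False := by
  classical
  obtain ⟨h1, hh1, i1⟩ := smn (g := fun c n => cond (Code.evaln n c 0).isSome 1 0)
    (Computable.cond hs_comp (Computable.const 1) (Computable.const 0))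
  obtain ⟨h2, hh2, i2⟩ := smn (g := fun c n => cond (Code.evaln n c 0).isSome 0 1)
    (Computable.cond hs_comp (Computable.const 0) (Computable.const 1))
  obtain ⟨h3, hh3, i3⟩ := smn (g := fun c n => 0) (Computable.const 0)
  have key : ∀ c, γ (Nat.pair (h1 c) (Nat.pair (h2 c) (h3 c))) =
      Part.some (if (Code.eval c 0).Dom then 1 else 0) := by
    intro c
    have := H c (h1 c) (h2 c) (h3 c)
      (by intro n; rw [i1]; cases h : (Code.evaln n c 0).isSome <;> simp [HS, h])
      (by intro n; rw [i2]; cases h : (Code.evaln n c 0).isSome <;> simp [HS, h])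
      (by intro n; rw [i3]; simp)
    split_ifs with hd
    · exact this.1 hd
    · exact this.2 hd
  have pr : Partrec (fun c : Code => γ (Nat.pair (h1 c) (Nat.pair (h2 c) (h3 c)))) :=
    hγ.comp (Primrec₂.natPair.to_comp.comp hh1 (Primrec₂.natPair.to_comp.comp hh2 hh3))
  have cm : Computable (fun c : Code => if (Code.eval c 0).Dom then 1 else 0) :=
    Partrec.of_eq pr key
  refine ComputablePred.halting_problem 0 ⟨Classical.decPred _, ?_⟩
  have hl : Computable₂ (fun a b : ℕ => decide (a < b)) := (Primrec.nat_lt.decide).to_comp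
  refine (hl.comp (Computable.const 0) cm).of_eq fun c => ?_
  by_cases h : (Code.eval c 0).Dom <;> simp [h]

end Mihara

/-- Mihara's Theorem: every pairwise computable REC-social welfare
function satisfying unanimity and independence is dictatorial. -/
theorem mihara_theorem {X : Type*}
    (hX : ∃ a b c : X, a ≠ b ∧ a ≠ c ∧ b ≠ c)
    (σ : (ℕ → X → X → Prop) → X → X → Prop)
    (hW : ∀ f : ℕ → X → X → Prop, GoodProfile f → IsWeakPref (σ f))
    (hU : Unanimity σ) (hI : Independence σ)
    (hPC : PairwiseComputable σ) :
    ∃ v0 : ℕ, ∀ (x y : X) (f : ℕ → X → X → Prop), GoodProfile f →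
      f v0 x y → σ f x y := by
  classical
  open Mihara in
  by_cases hn : ∃ n : ℕ, Dec σ {n}
  · obtain ⟨n, hn⟩ := hn
    refine ⟨n, fun x y f hf h => ?_⟩
    refine hn x y ?_ f hf (by rintro v rfl; exact h)
    rintro rfl
    exact (hf.1 n).1 _ _ h h
  exfalso
  push Not at hn
  obtain ⟨a, b, c, hab, hac, hbc⟩ := id hX
  obtain ⟨γ, hγ, H⟩ := hPC a b hab
  refine no_sep hγ ?_
  intro k e1 e2 e3 i1 i2 i3
  have hA := hs_set k
  let f := prof a b b (fun v => if v ∈ HS k then 0 else 1) (fun v => if v ∈ HS k then 1 else 0)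
    (fun _ => 0)
  have hf : GoodProfile f := prof_good a b b (comp_ite hA (comp_const 0) (comp_const 1))
    (comp_ite hA (comp_const 1) (comp_const 0)) (comp_const 0)
  have f1 : ∀ v, f v a b ↔ v ∈ HS k := by
    intro v
    by_cases hv : v ∈ HS k <;> simp [f, prof, util_a, util_b hab, hv]
  have f2 : ∀ v, f v b a ↔ v ∉ HS k := by
    intro v
    by_cases hv : v ∈ HS k <;> simp [f, prof, util_a, util_b hab, hv]
  have HH := H f hf e1 e2 e3 (by simpa only [f1, Set.setOf_mem_eq] using i1)
    (by
      convert i2 using 1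
      ext v; simp [f2])
    (by
      convert i3 using 1
      ext v; simp [f1, f2])
  constructor
  · intro hd
    apply HH.1
    have hx := Part.get_mem hd
    obtain ⟨m, hm⟩ := Nat.Partrec.Code.evaln_complete.1 hx
    refine (dec_tail hX hW hU hI hn m).1 a b hab f hf ?_
    intro v hv
    rw [f1]
    have := Nat.Partrec.Code.evaln_mono hv hm
    exact Option.isSome_iff_exists.2 ⟨_, this⟩
  · intro hd
    apply HH.2
    intro hs
    refine (hW f hf).1 _ _ hs (hU b a f hf ?_)
    intro v
    rw [f2]
    intro hv
    obtain ⟨x, hx⟩ := Option.isSome_iff_exists.1 hv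
    exact hd (Part.dom_iff_mem.2 ⟨x, Nat.Partrec.Code.evaln_sound hx⟩)
end

section
/- Let σ be a REC-social welfare function satisfying unanimity and independence (on REC-measurable profiles), where X has at least 3 elements, and let U be an ultrafilter on the Boolean algebra REC that is decisive for σ. If σ is pairwise computable, then σ satisfies DDC with respect to U: the partial function β_σ has an extension to a partial recursive function. -/
/-- The profile in which members of `A` rank `a` strictly below everything else,
and non-members rank it strictly above everything else. -/
def ddcProf {X : Type*} (A : Set ℕ) (a : X) (v : ℕ) (x y : X) : Prop :=
  (v ∈ A ∧ x = a ∧ y ≠ a) ∨ (v ∉ A ∧ x ≠ a ∧ y = a)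

theorem ddc_prof_good {X : Type*} (A : Set ℕ) (hA : ComputableSet A) (a : X) :
    GoodProfile (ddcProf A a) := by
  constructor
  · intro v
    constructor
    · intro x y
      unfold ddcProf
      tauto
    · intro x y z
      unfold ddcProf
      tauto
  · intro x y
    by_cases hx : x = a <;> by_cases hy : y = a
    · refine ComputablePred.of_eq (p := fun _ => False) ⟨inferInstance, Computable.const _⟩ ?_
      simp [ddcProf, hx, hy]
    · refine ComputablePred.of_eq hA ?_
      simp [ddcProf, hx, hy]
    · refine ComputablePred.of_eq hA.not ?_
      simp [ddcProf, hx, hy]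
    · refine ComputablePred.of_eq (p := fun _ => False) ⟨inferInstance, Computable.const _⟩ ?_
      simp [ddcProf, hx, hy]

theorem ddc_neg_code : ∃ c : Nat.Partrec.Code, ∀ n, c.eval n = Part.some (1 - n) := by
  have h : Computable (fun n : ℕ => 1 - n) :=
    (Primrec.nat_sub.comp (Primrec.const 1) Primrec.id).to_comp
  obtain ⟨c, hc⟩ := Nat.Partrec.Code.exists_code.1 (Partrec.nat_iff.1 h.partrec)
  exact ⟨c, fun n => by rw [hc]; rfl⟩

/-- a pairwise computable REC-social welfare function with decisive
REC-ultrafilter `𝒰` satisfies DDC w.r.t. `𝒰`. -/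
theorem pairwise_computable_implies_ddc {X : Type*}
    (hX : ∃ a b c : X, a ≠ b ∧ a ≠ c ∧ b ≠ c)
    (σ : (ℕ → X → X → Prop) → X → X → Prop)
    (hW : ∀ f : ℕ → X → X → Prop, GoodProfile f → IsWeakPref (σ f))
    (hU : Unanimity σ) (hI : Independence σ)
    (𝒰 : Set (Set ℕ)) (h𝒰 : RECUltrafilter 𝒰) (hD : Decisive σ 𝒰)
    (hPC : PairwiseComputable σ) :
    DDC 𝒰 := by
  obtain ⟨a, b, -, hab, -, -⟩ := hX
  obtain ⟨γ, hγ, hg⟩ := hPC a b hab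
  obtain ⟨c, hc⟩ := ddc_neg_code
  refine ⟨fun e => γ (Nat.pair e (Nat.pair (Encodable.encode
    (c.comp (Denumerable.ofNat Nat.Partrec.Code e)))
    (Encodable.encode Nat.Partrec.Code.zero))), ?_, ?_⟩
  · refine hγ.comp (Primrec.to_comp ?_)
    refine Primrec₂.natPair.comp Primrec.id (Primrec₂.natPair.comp ?_ (Primrec.const _))
    exact Primrec.encode.comp (Nat.Partrec.Code.primrec₂_comp.comp (Primrec.const c)
      (Primrec.ofNat Nat.Partrec.Code))
  · intro e A hA he
    have hgood := ddc_prof_good (X := X) A hA a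
    have h1 : {v : ℕ | ddcProf A a v a b} = A := by
      ext v; simp [ddcProf, hab.symm]
    have h2 : {v : ℕ | ddcProf A a v b a} = Aᶜ := by
      ext v; simp [ddcProf, hab.symm]
    have h3 : {v : ℕ | ¬ ddcProf A a v a b ∧ ¬ ddcProf A a v b a} = ∅ := by
      ext v; simp [ddcProf, hab.symm]
    have key := hg (ddcProf A a) hgood e (Encodable.encode
      (c.comp (Denumerable.ofNat Nat.Partrec.Code e)))
      (Encodable.encode Nat.Partrec.Code.zero) (by rw [h1]; exact he)
      (by
        rw [h2]
        intro n
        have hn := he n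
        simp only [phi] at hn ⊢
        simp only [Denumerable.ofNat_encode, Nat.Partrec.Code.eval]
        constructor
        · intro h
          rw [hn.2 h]
          exact (Part.bind_some _ _).trans (hc _)
        · intro h
          rw [hn.1 (by simpa using h)]
          exact (Part.bind_some _ _).trans (hc _))
      (by
        rw [h3]
        intro n
        simp only [phi, Denumerable.ofNat_encode, Nat.Partrec.Code.eval]
        simp
        rfl)
    constructor
    · intro h
      refine key.1 (hD A h a b _ hgood fun v hv => ?_)
      exact (Set.ext_iff.1 h1 v).2 hv
    · intro h
      have hc' : Aᶜ ∈ 𝒰 := by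
        rcases h𝒰.2.2.2.2 A hA with h' | h'
        · exact absurd h'.1 h
        · exact h'.1
      refine key.2 ((hW _ hgood).1 b a (hD Aᶜ hc' b a _ hgood fun v hv => ?_))
      exact (Set.ext_iff.1 h2 v).2 hv
end
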